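/- (Very-large majority, first bound.) There exists n₀ such that for all n ≥ n₀ the following holds. Let c̄ be a k-cd for n nodes with s(c̄) ≥ n/3, attained with majority color m ∈ M(c̄). If n − c_m ≥ n^{1/4}·log n, then Pr[ C̄_{m,t+1} ≥ (17/18)·(n − c_m) | C_t = c̄ ] ≤ 1/n², where C̄_{m,t+1} = n − C_{m,t+1}. -/

import Mathlib

open Finset

/-- The color appearing at least twice among `x, y, z`, or `x` if all three are distinct. -/
def maj3 {k : ℕ} (x y z : Fin k) : Fin k := if y = z then y else x

/-- Number of nodes with color `j` in the assignment `a`. -/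
def cnt {n k : ℕ} (a : Fin n → Fin k) (j : Fin k) : ℕ :=
  (Finset.univ.filter (fun i => a i = j)).card

/-- One sample for a round of the 3-majority dynamics: each node picks three nodes
(uniformly at random, with replacement). -/
abbrev Sample (n : ℕ) := Fin n → Fin n × Fin n × Fin n

/-- The assignment obtained from `a` after one step of the 3-majority dynamics with samples `S`. -/
def stepA {n k : ℕ} (a : Fin n → Fin k) (S : Sample n) : Fin n → Fin k :=
  fun i => maj3 (a (S i).1) (a (S i).2.1) (a (S i).2.2)

/-- Probability that the event `E` holds for the configuration obtained from `a`
after one step of the 3-majority dynamics (samples are uniform and independent). -/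
noncomputable def stepPr {n k : ℕ} (a : Fin n → Fin k) (E : (Fin n → Fin k) → Prop) : ℝ :=
  (Nat.card {S : Sample n // E (stepA a S)} : ℝ) / (Nat.card (Sample n) : ℝ)

/-- Expectation of `f` of the configuration obtained from `a` after one step of the
3-majority dynamics. -/
noncomputable def stepE {n k : ℕ} (a : Fin n → Fin k) (f : (Fin n → Fin k) → ℝ) : ℝ :=
  (∑ S : Sample n, f (stepA a S)) / (Nat.card (Sample n) : ℝ)

/-- `m(c̄)`: the size of the largest color class. -/
def mval {k : ℕ} (c : Fin k → ℕ) : ℕ := Finset.univ.sup c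

/-- `M(c̄)`: the set of colors attaining the maximum. -/
def Mset {k : ℕ} (c : Fin k → ℕ) : Finset (Fin k) :=
  Finset.univ.filter (fun j => c j = mval c)

/-- `s(c̄)`: the bias, i.e. the gap between the (unique) maximum and the second largest
color class; `0` if the maximum is not unique. -/
def sval {k : ℕ} (c : Fin k → ℕ) : ℕ :=
  if (Mset c).card = 1 then mval c - (Finset.univ \ Mset c).sup c else 0

/-- `α(c̄) = (n − m(c̄))·s(c̄)/n²`. -/
noncomputable def alphaV (n : ℕ) {k : ℕ} (c : Fin k → ℕ) : ℝ :=
  ((n : ℝ) - mval c) * sval c / (n : ℝ) ^ 2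

/-- `γ(c̄) = (n·m(c̄) − Σ_h c_h²)/n² − α(c̄)`. -/
noncomputable def gammaV (n : ℕ) {k : ℕ} (c : Fin k → ℕ) : ℝ :=
  ((n : ℝ) * mval c - ∑ h, (c h : ℝ) ^ 2) / (n : ℝ) ^ 2 - alphaV n c

/-- The trajectory of the 3-majority dynamics started at `a`, driven by the samples `S`
for the first `N` rounds. -/
def trajA {n k N : ℕ} (a : Fin n → Fin k) (S : Fin N → Sample n) : ℕ → Fin n → Fin k
  | 0 => a
  | t + 1 => if h : t < N then stepA (trajA a S t) (S ⟨t, h⟩) else trajA a S t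

/-- Probability of an event `E` for an `N`-round run of the 3-majority dynamics
(all samples of all rounds are uniform and independent). -/
noncomputable def runPr {n k : ℕ} (N : ℕ) (a : Fin n → Fin k)
    (E : (Fin N → Sample n) → Prop) : ℝ :=
  (Nat.card {S : Fin N → Sample n // E S} : ℝ) / (Nat.card (Fin N → Sample n) : ℝ)

/-!
Given the configuration `a`, the nodes update independently and the expected number of nodes
adopting `m` is `c_m (1 + (n c_m - ∑ c_h²) / n²)`. Every other color is at least `s` smaller than
`m`, so `n c_m - ∑ c_h² ≥ (n - c_m) s`, and the expected minority is at most
`(n - c_m) (1 - c_m s / n²) ≤ 8/9 (n - c_m)`, because `c_m ≥ s ≥ n/3`. As `17/18 = (1 + 1/16) 8/9`,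
the multiplicative Chernoff bound gives a failure probability of at most `exp (-(n - c_m) / 594)`,
which is at most `n⁻²` once `n - c_m ≥ 1188 log n`.
-/

section Chernoff

open MeasureTheory ProbabilityTheory

variable {Ω : Type*} {mΩ : MeasurableSpace Ω} {μ : Measure Ω}

theorem mgf_le_exp_of_mem_Icc_zero_one [IsProbabilityMeasure μ] {X : Ω → ℝ}
    (hX : AEMeasurable X μ) (hX01 : ∀ᵐ ω ∂μ, X ω ∈ Set.Icc 0 1) (t : ℝ) :
    mgf X μ t ≤ Real.exp ((Real.exp t - 1) * μ[X]) := by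
  have hXint : Integrable X μ := .of_mem_Icc 0 1 hX hX01
  have bernoulli : ∀ᵐ ω ∂μ, Real.exp (t * X ω) ≤ 1 + X ω * (Real.exp t - 1) := by
    filter_upwards [hX01] with ω hω
    have h := rpow_one_add_le_one_add_mul_self (s := Real.exp t - 1)
      (by linarith [Real.exp_pos t]) hω.1 hω.2
    rwa [add_sub_cancel, ← Real.exp_mul] at h
  calc mgf X μ t
    _ ≤ ∫ ω, (1 + X ω * (Real.exp t - 1)) ∂μ :=
      integral_mono_ae (integrable_exp_mul_of_mem_Icc hX hX01)
        ((integrable_const 1).add (hXint.mul_const _)) bernoulli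
    _ = (Real.exp t - 1) * μ[X] + 1 := by
      rw [integral_add (integrable_const 1) (hXint.mul_const _), integral_mul_const]
      simp [mul_comm, add_comm]
    _ ≤ Real.exp ((Real.exp t - 1) * μ[X]) := Real.add_one_le_exp _

theorem sq_div_two_add_le_one_add_mul_log_sub {δ : ℝ} (hδ : 0 ≤ δ) :
    δ ^ 2 / (2 + δ) ≤ (1 + δ) * Real.log (1 + δ) - δ := by
  have hlog := mul_le_mul_of_nonneg_left (Real.le_log_one_add_of_nonneg hδ)
    (by positivity : 0 ≤ 1 + δ)
  have hsplit : δ ^ 2 / (2 + δ) = (1 + δ) * (2 * δ / (δ + 2)) - δ := by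
    field_simp
    ring
  linarith

theorem measure_sum_ge_le_exp_of_mem_Icc_zero_one {ι : Type*} {X : ι → Ω → ℝ}
    (h_indep : iIndepFun X μ) (hX : ∀ i, AEMeasurable (X i) μ)
    (hX01 : ∀ i, ∀ᵐ ω ∂μ, X i ω ∈ Set.Icc 0 1) (s : Finset ι) {M δ : ℝ}
    (hM : ∑ i ∈ s, μ[X i] ≤ M) (hδ : 0 ≤ δ) :
    μ.real {ω | (1 + δ) * M ≤ ∑ i ∈ s, X i ω} ≤ Real.exp (-(δ ^ 2 / (2 + δ) * M)) := by
  have : IsProbabilityMeasure μ := h_indep.isProbabilityMeasure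
  have hM0 : 0 ≤ M := (sum_nonneg fun i _ ↦ integral_nonneg_of_ae <| by
    filter_upwards [hX01 i] with ω hω using hω.1).trans hM
  -- `log (1 + δ)` minimises the exponent `(exp t - 1 - t * (1 + δ)) * M` over `t`.
  set t := Real.log (1 + δ) with ht
  have hexp : Real.exp t - 1 = δ := by rw [ht, Real.exp_log (by positivity), add_sub_cancel_left]
  have hmgf : mgf (∑ i ∈ s, X i) μ t ≤ Real.exp (δ * M) :=
    calc mgf (∑ i ∈ s, X i) μ t
      _ = ∏ i ∈ s, mgf (X i) μ t := h_indep.mgf_sum₀ hX s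
      _ ≤ ∏ i ∈ s, Real.exp (δ * μ[X i]) := prod_le_prod (fun _ _ ↦ mgf_nonneg) fun i _ ↦
        hexp ▸ mgf_le_exp_of_mem_Icc_zero_one (hX i) (hX01 i) t
      _ = Real.exp (δ * ∑ i ∈ s, μ[X i]) := by rw [← Real.exp_sum, mul_sum]
      _ ≤ Real.exp (δ * M) := by gcongr
  have hsum01 : ∀ᵐ ω ∂μ, (∑ i ∈ s, X i) ω ∈ Set.Icc 0 (#s : ℝ) := by
    filter_upwards [(ae_ball_iff s.countable_toSet).2 fun i _ ↦ hX01 i] with ω hω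
    rw [Finset.sum_apply]
    exact ⟨sum_nonneg fun i hi ↦ (hω i hi).1,
      (sum_le_card_nsmul s _ 1 fun i hi ↦ (hω i hi).2).trans_eq (by simp)⟩
  calc μ.real {ω | (1 + δ) * M ≤ ∑ i ∈ s, X i ω}
    _ = μ.real {ω | (1 + δ) * M ≤ (∑ i ∈ s, X i) ω} := by simp only [Finset.sum_apply]
    _ ≤ Real.exp (-t * ((1 + δ) * M)) * mgf (∑ i ∈ s, X i) μ t :=
      measure_ge_le_exp_mul_mgf _ (Real.log_nonneg (by linarith))
        (integrable_exp_mul_of_mem_Icc (s.aemeasurable_sum fun i _ ↦ hX i) hsum01)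
    _ ≤ Real.exp (-t * ((1 + δ) * M)) * Real.exp (δ * M) := by gcongr
    _ = Real.exp (-(((1 + δ) * t - δ) * M)) := by
      rw [← Real.exp_add]
      ring_nf
    _ ≤ Real.exp (-(δ ^ 2 / (2 + δ) * M)) := by
      gcongr
      exact sq_div_two_add_le_one_add_mul_log_sub hδ

end Chernoff

section UniformOn

open MeasureTheory ProbabilityTheory

variable {Ω : Type*} [MeasurableSpace Ω] [MeasurableSingletonClass Ω]

theorem uniformOn_univ_real_setOf [Finite Ω] (p : Ω → Prop) :
    (uniformOn Set.univ : Measure Ω).real {ω | p ω} = (Nat.card {ω // p ω} : ℝ) / Nat.card Ω := by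
  have := Fintype.ofFinite Ω
  rw [measureReal_def, uniformOn_univ, Measure.count_apply_finite _ (Set.toFinite _),
    Nat.card_eq_fintype_card (α := Ω), ← Nat.card_eq_card_finite_toFinset,
    ENNReal.toReal_div, ENNReal.toReal_natCast, ENNReal.toReal_natCast]
  rfl

theorem integral_uniformOn_univ [Fintype Ω] (f : Ω → ℝ) :
    ∫ ω, f ω ∂uniformOn Set.univ = (∑ ω, f ω) / Nat.card Ω := by
  rw [uniformOn, ProbabilityTheory.cond, Measure.restrict_univ, integral_smul_measure,
    integral_count]
  simp [div_eq_inv_mul]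

end UniformOn

section ColorCounts

variable {n k : ℕ} (a : Fin n → Fin k)

theorem sum_comp_eq_sum_cnt_mul (g : Fin k → ℝ) : ∑ i, g (a i) = ∑ h, cnt a h * g h := by
  rw [← sum_fiberwise univ a]
  refine sum_congr rfl fun h _ ↦ ?_
  rw [sum_congr rfl fun i hi ↦ congrArg g (mem_filter.1 hi).2, sum_const, nsmul_eq_mul, cnt]

theorem sum_cnt : ∑ h, (cnt a h : ℝ) = n := by
  simpa using (sum_comp_eq_sum_cnt_mul a fun _ ↦ 1).symm

theorem sum_ite_eq_cnt (j : Fin k) : ∑ i, (if a i = j then (1 : ℝ) else 0) = cnt a j := by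
  simp [cnt]

theorem sum_ite_ne_eq_sub_cnt (j : Fin k) :
    ∑ i, (if a i = j then (0 : ℝ) else 1) = n - cnt a j := by
  rw [eq_sub_iff_add_eq, ← sum_ite_eq_cnt, ← sum_add_distrib]
  simp [ite_add_ite]

theorem sum_maj3_eq (j : Fin k) :
    ∑ t : Fin n × Fin n × Fin n,
        (if maj3 (a t.1) (a t.2.1) (a t.2.2) = j then (1 : ℝ) else 0) =
      cnt a j * (n ^ 2 + (n * cnt a j - ∑ h, (cnt a h : ℝ) ^ 2)) := by
  let w (q r : Fin k) : ℝ :=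
    cnt a j + if q = r then (if q = j then (n : ℝ) else 0) - cnt a j else 0
  have sum_first_sample (q r : Fin k) :
      ∑ x, (if maj3 (a x) q r = j then (1 : ℝ) else 0) = w q r := by
    by_cases hqr : q = r
    · by_cases hqj : r = j <;> simp [w, maj3, hqr, hqj]
    · simp only [w, maj3, hqr, if_false, sum_ite_eq_cnt, add_zero]
  calc ∑ t : Fin n × Fin n × Fin n,
        (if maj3 (a t.1) (a t.2.1) (a t.2.2) = j then (1 : ℝ) else 0)
    _ = ∑ y, ∑ z, ∑ x, (if maj3 (a x) (a y) (a z) = j then (1 : ℝ) else 0) := by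
      rw [Fintype.sum_prod_type_right, Fintype.sum_prod_type]
    _ = ∑ y, ∑ z, w (a y) (a z) := by simp only [sum_first_sample]
    _ = ∑ q, cnt a q * ∑ r, cnt a r * w q r := by
      rw [sum_comp_eq_sum_cnt_mul a fun q ↦ ∑ z, w q (a z)]
      simp only [sum_comp_eq_sum_cnt_mul a (w _)]
    _ = cnt a j * (n ^ 2 + (n * cnt a j - ∑ h, (cnt a h : ℝ) ^ 2)) := by
      simp only [w, mul_add, mul_sub, mul_ite, mul_zero, sum_add_distrib, sum_sub_distrib,
        sum_ite_eq, sum_ite_eq', mem_univ, if_true, ← sum_mul, sum_cnt, ← mul_assoc, ← sq]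
      ring

end ColorCounts

section Bias

variable {k : ℕ} {c : Fin k → ℕ} {m : Fin k}

theorem sval_le_of_mem_Mset (hm : m ∈ Mset c) : sval c ≤ c m := by
  have hcm : c m = mval c := (mem_filter.1 hm).2
  unfold sval
  split_ifs <;> omega

theorem add_sval_le_of_mem_Mset (hm : m ∈ Mset c) {h : Fin k} (hne : h ≠ m) :
    c h + sval c ≤ c m := by
  have hcm : c m = mval c := (mem_filter.1 hm).2
  have hle : c h ≤ mval c := le_sup (mem_univ h)
  unfold sval
  split_ifs with hcard
  · have hmem : h ∈ univ \ Mset c := by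
      obtain ⟨x, hx⟩ := card_eq_one.1 hcard
      simp_all
    have := le_sup (f := c) hmem
    omega
  · omega

theorem sub_mul_sval_le (hm : m ∈ Mset c) :
    (∑ h, (c h : ℝ) - c m) * sval c ≤ (∑ h, (c h : ℝ)) * c m - ∑ h, (c h : ℝ) ^ 2 := by
  have hgap (h : Fin k) (hne : h ≠ m) : (c h : ℝ) * sval c ≤ c h * (c m - c h) := by
    have : (c h : ℝ) + sval c ≤ c m := mod_cast add_sval_le_of_mem_Mset hm hne
    gcongr
    linarith
  calc (∑ h, (c h : ℝ) - c m) * sval c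
    _ = ∑ h ∈ univ.erase m, (c h : ℝ) * sval c := by
      rw [← sum_mul, ← add_sum_erase univ _ (mem_univ m), add_sub_cancel_left]
    _ ≤ ∑ h ∈ univ.erase m, (c h : ℝ) * (c m - c h) :=
      sum_le_sum fun h hh ↦ hgap h (ne_of_mem_erase hh)
    _ = ∑ h, (c h : ℝ) * (c m - c h) := sum_erase _ (by simp)
    _ = (∑ h, (c h : ℝ)) * c m - ∑ h, (c h : ℝ) ^ 2 := by
      simp only [mul_sub, sum_sub_distrib, sum_mul, sq]

end Bias

section Step

open MeasureTheory ProbabilityTheory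

variable {n k : ℕ} (a : Fin n → Fin k)

theorem stepPr_eq_uniformOn_real (E : (Fin n → Fin k) → Prop) :
    stepPr a E = (uniformOn Set.univ : Measure (Sample n)).real {S | E (stepA a S)} :=
  (uniformOn_univ_real_setOf _).symm

theorem stepE_eq_integral (f : (Fin n → Fin k) → ℝ) :
    stepE a f = ∫ S, f (stepA a S) ∂(uniformOn Set.univ : Measure (Sample n)) :=
  (integral_uniformOn_univ _).symm

theorem uniformOn_univ_sample :
    (uniformOn Set.univ : Measure (Sample n)) = Measure.pi fun _ ↦ uniformOn Set.univ := by
  rw [← uniformOn_pi, Set.pi_univ]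

variable [NeZero n]

theorem stepE_cnt (j : Fin k) :
    stepE a (fun b ↦ (cnt b j : ℝ)) =
      cnt a j * (1 + (n * cnt a j - ∑ h, (cnt a h : ℝ) ^ 2) / n ^ 2) := by
  let g (t : Fin n × Fin n × Fin n) : ℝ :=
    if maj3 (a t.1) (a t.2.1) (a t.2.2) = j then 1 else 0
  have node_marginal (i : Fin n) :
      ∫ S, g (S i) ∂(uniformOn Set.univ : Measure (Sample n)) = (∑ t, g t) / (n : ℝ) ^ 3 := by
    rw [uniformOn_univ_sample, integral_comp_eval .of_discrete, integral_uniformOn_univ]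
    simp [pow_succ']
  calc stepE a (fun b ↦ (cnt b j : ℝ))
    _ = ∑ i, ∫ S, g (S i) ∂(uniformOn Set.univ : Measure (Sample n)) := by
      simp only [← sum_ite_eq_cnt]
      rw [stepE_eq_integral, integral_finsetSum _ fun _ _ ↦ .of_finite]
      rfl
    _ = n * ((∑ t, g t) / (n : ℝ) ^ 3) := by simp [node_marginal]
    _ = cnt a j * (1 + (n * cnt a j - ∑ h, (cnt a h : ℝ) ^ 2) / n ^ 2) := by
      rw [sum_maj3_eq]
      have : (n : ℝ) ≠ 0 := NeZero.ne _
      field_simp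

theorem stepE_sub_cnt_le {m : Fin k} (hm : m ∈ Mset (cnt a)) :
    stepE a (fun b ↦ (n : ℝ) - cnt b m) ≤
      (n - cnt a m) * (1 - cnt a m * sval (cnt a) / n ^ 2) := by
  have hbias : ((n : ℝ) - cnt a m) * sval (cnt a) ≤ n * cnt a m - ∑ h, (cnt a h : ℝ) ^ 2 := by
    simpa only [sum_cnt] using sub_mul_sval_le hm
  calc stepE a (fun b ↦ (n : ℝ) - cnt b m)
    _ = n - stepE a (fun b ↦ (cnt b m : ℝ)) := by
      simp only [stepE_eq_integral]
      rw [integral_sub .of_finite .of_finite]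
      simp
    _ = n - cnt a m * (1 + (n * cnt a m - ∑ h, (cnt a h : ℝ) ^ 2) / n ^ 2) := by rw [stepE_cnt]
    _ ≤ n - cnt a m * (1 + (n - cnt a m) * sval (cnt a) / n ^ 2) := by gcongr
    _ = (n - cnt a m) * (1 - cnt a m * sval (cnt a) / n ^ 2) := by ring

theorem stepPr_sum_ge_le_exp {f : Fin n → Fin k → ℝ} (hf : ∀ i h, f i h ∈ Set.Icc 0 1)
    {M δ : ℝ} (hM : stepE a (fun b ↦ ∑ i, f i (b i)) ≤ M) (hδ : 0 ≤ δ) :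
    stepPr a (fun b ↦ (1 + δ) * M ≤ ∑ i, f i (b i)) ≤ Real.exp (-(δ ^ 2 / (2 + δ) * M)) := by
  rw [stepE_eq_integral, integral_finsetSum _ fun _ _ ↦ .of_finite] at hM
  rw [stepPr_eq_uniformOn_real]
  have h_indep : iIndepFun (fun i (S : Sample n) ↦ f i (stepA a S i)) (uniformOn Set.univ) := by
    rw [uniformOn_univ_sample]
    exact iIndepFun_pi (X := fun i (t : Fin n × Fin n × Fin n) ↦
      f i (maj3 (a t.1) (a t.2.1) (a t.2.2))) fun _ ↦ .of_discrete
  exact measure_sum_ge_le_exp_of_mem_Icc_zero_one h_indep (fun _ ↦ .of_discrete)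
    (fun i ↦ .of_forall fun S ↦ hf i _) univ hM hδ

theorem stepPr_minority_ge_le_exp {m : Fin k} (hm : m ∈ Mset (cnt a))
    (hs : (n : ℝ) / 3 ≤ sval (cnt a)) :
    stepPr a (fun b ↦ 17 / 18 * ((n : ℝ) - cnt a m) ≤ n - cnt b m) ≤
      Real.exp (-((n - cnt a m) / 594)) := by
  have hm_ge : (n : ℝ) / 3 ≤ cnt a m := hs.trans (mod_cast sval_le_of_mem_Mset hm)
  have hm_le : (cnt a m : ℝ) ≤ n :=
    (single_le_sum (fun h _ ↦ Nat.cast_nonneg (cnt a h)) (mem_univ m)).trans_eq (sum_cnt a)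
  have hdrift : (1 : ℝ) / 9 ≤ cnt a m * sval (cnt a) / n ^ 2 := by
    have hn : (0 : ℝ) < n := mod_cast NeZero.pos n
    rw [le_div_iff₀ (by positivity)]
    calc (1 : ℝ) / 9 * n ^ 2
      _ = n / 3 * (n / 3) := by ring
      _ ≤ cnt a m * sval (cnt a) := by gcongr
  have hmean : stepE a (fun b ↦ (n : ℝ) - cnt b m) ≤ 8 / 9 * (n - cnt a m) := by
    refine (stepE_sub_cnt_le a hm).trans ?_
    rw [mul_comm (8 / 9 : ℝ)]
    exact mul_le_mul_of_nonneg_left (by linarith) (sub_nonneg.2 hm_le)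
  simp only [← sum_ite_ne_eq_sub_cnt] at hmean ⊢
  have tail := stepPr_sum_ge_le_exp a (f := fun _ h ↦ if h = m then 0 else 1)
    (fun _ h ↦ by split_ifs <;> simp) hmean (δ := 1 / 16) (by norm_num)
  convert tail using 4
  all_goals ring

end Step

theorem eventually_const_mul_log_le_rpow_mul_log (C : ℝ) {ε : ℝ} (hε : 0 < ε) :
    ∀ᶠ n : ℕ in Filter.atTop, C * Real.log n ≤ (n : ℝ) ^ ε * Real.log n := by
  filter_upwards [((tendsto_rpow_atTop hε).comp tendsto_natCast_atTop_atTop).eventually_ge_atTop C]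
    with n hn
  exact mul_le_mul_of_nonneg_right hn (Real.log_natCast_nonneg n)

theorem minority_shrinks_general {n k : ℕ} [NeZero n] (a : Fin n → Fin k) {m : Fin k}
    (hm : m ∈ Mset (cnt a)) (hs : (n : ℝ) / 3 ≤ sval (cnt a))
    (hq : 1188 * Real.log n ≤ n - cnt a m) :
    stepPr a (fun b ↦ 17 / 18 * ((n : ℝ) - cnt a m) ≤ n - cnt b m) ≤ 1 / (n : ℝ) ^ 2 := by
  have hn : (0 : ℝ) < n := mod_cast NeZero.pos n
  calc stepPr a (fun b ↦ 17 / 18 * ((n : ℝ) - cnt a m) ≤ n - cnt b m)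
    _ ≤ Real.exp (-((n - cnt a m) / 594)) := stepPr_minority_ge_le_exp a hm hs
    _ ≤ Real.exp (-(2 * Real.log n)) := by
      gcongr
      linarith
    _ = 1 / (n : ℝ) ^ 2 := by
      rw [Real.exp_neg, two_mul, Real.exp_add, Real.exp_log hn, one_div, sq]

/-- Lemma (very-large majority), first bound: for all sufficiently large `n`, if
`s(c̄) ≥ n/3` with majority color `m` and `n − c_m ≥ n^{1/4}·log n`, then
`Pr[C̄_{m,t+1} ≥ (17/18)·(n − c_m) | C_t = c̄] ≤ 1/n²`. -/
theorem minority_shrinks : ∃ n₀ : ℕ, ∀ n : ℕ, n₀ ≤ n → ∀ k : ℕ, ∀ c : Fin k → ℕ,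
    (∑ h, c h = n) → ∀ a : Fin n → Fin k, (∀ h, cnt a h = c h) →
    ∀ m : Fin k, m ∈ Mset c → (sval c : ℝ) ≥ (n : ℝ) / 3 →
    ((n : ℝ) - (c m : ℝ) ≥ (n : ℝ) ^ ((1 : ℝ) / 4) * Real.log n) →
    stepPr a (fun b =>
        (n : ℝ) - (cnt b m : ℝ) ≥ 17 / 18 * ((n : ℝ) - (c m : ℝ))) ≤ 1 / (n : ℝ) ^ 2 := by
  obtain ⟨n₀, h_log⟩ := Filter.eventually_atTop.1 <|
    (eventually_const_mul_log_le_rpow_mul_log 1188 (by norm_num : (0 : ℝ) < 1 / 4)).and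
      (Filter.eventually_ne_atTop 0)
  refine ⟨n₀, fun n hn k c _ a hac m hm hs hq ↦ ?_⟩
  obtain rfl : cnt a = c := funext hac
  obtain ⟨hlog, hn0⟩ := h_log n hn
  have : NeZero n := ⟨hn0⟩
  exact minority_shrinks_general a hm hs (hlog.trans hq)
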